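/- For n ≤ 4, every n × n doubly nonnegative matrix is completely positive (Diananda's theorem); in particular for n = 2, every symmetric positive semidefinite matrix with nonnegative entries is completely positive. -/

import Mathlib

/-!
Rank-one pieces `ε • z zᵀ` with `z ≥ 0` are peeled off a doubly nonnegative matrix `B` as long as
`B ≠ 0`. If `z = B c` lies in the range of `B`, then `B - ε z zᵀ` is positive semidefinite exactly
for `ε ≤ 1 / (cᵀ B c)`, and if moreover `B i j ≠ 0` whenever `z i * z j ≠ 0`, it stays entrywise
nonnegative for small `ε`. For the largest admissible `ε`, either the rank of `B` or the number of
its nonzero entries drops (`exists_peel`), so the process ends at `0`.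

It remains to find, for `B ≠ 0` of size `n ≤ 4`, a nonzero `z ≥ 0` in the range of `B` whose support
is a clique of the graph `G` of nonzero entries of `B` (`exists_clique_vector`).
If `G` has a simplicial vertex `i` (its neighbours are pairwise adjacent) with `B i i ≠ 0`, then
column `i` of `B` will do. Otherwise `n = 4` and `G` is a 4-cycle `a b c d`
(`simplicial_or_cycle`). In that case eliminating the rows `c`, `d` with columns `c`, `d`, as one
does for the Schur complement of the block `{c, d}`, turns column `a` into a vector supported on the
edge `{a, b}`. Its entry at `a` is a principal `3 × 3` minor, and its entry at `b` is
`(B c c * B d d - B c d ^ 2) * B a b + B b c * B c d * B a d > 0`.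
-/

/-- `B` is completely positive if it is a finite sum of rank-one matrices
`z zᵀ` with `z` entrywise nonnegative (the empty sum giving `B = 0`). -/
def IsCompletelyPositive {n : ℕ} (B : Matrix (Fin n) (Fin n) ℝ) : Prop :=
  ∃ (k : ℕ) (z : Fin k → Fin n → ℝ), (∀ j i, 0 ≤ z j i) ∧
    B = ∑ j, Matrix.vecMulVec (z j) (z j)

open Matrix

/-- If `z = B c` and `q = cᵀ B c`, then `B - ε z zᵀ` is positive semidefinite for `ε ≤ 1 / q`.
This is the Cauchy–Schwarz inequality for the form `B`. -/
lemma posSemidef_sub_smul_vecMulVec {n : ℕ} {B : Matrix (Fin n) (Fin n) ℝ} (hB : B.PosSemidef)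
    (c : Fin n → ℝ) (hq : 0 < c ⬝ᵥ B *ᵥ c) {ε : ℝ} (hε1 : ε ≤ 1 / (c ⬝ᵥ B *ᵥ c)) :
    (B - ε • vecMulVec (B *ᵥ c) (B *ᵥ c)).PosSemidef := by
  have hsym : Bᵀ = B := by simpa using hB.isHermitian.eq
  have hcx : ∀ x, c ⬝ᵥ B *ᵥ x = (B *ᵥ c) ⬝ᵥ x := fun x => by
    rw [dotProduct_mulVec, ← mulVec_transpose, hsym]
  refine .of_dotProduct_mulVec_nonneg ?_ fun x => ?_
  · rw [IsHermitian, conjTranspose_eq_transpose_of_trivial, transpose_sub, transpose_smul,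
      transpose_vecMulVec, hsym]
  · set q := c ⬝ᵥ B *ᵥ c
    set s := (B *ᵥ c) ⬝ᵥ x with hs
    have h1 : 0 ≤ x ⬝ᵥ B *ᵥ x - s ^ 2 / q := by
      have h := hB.dotProduct_mulVec_nonneg (x - (s / q) • c)
      have e : star (x - (s / q) • c) ⬝ᵥ B *ᵥ (x - (s / q) • c)
          = x ⬝ᵥ B *ᵥ x - s ^ 2 / q := by
        simp only [star_trivial, mulVec_sub, mulVec_smul, sub_dotProduct, dotProduct_sub,
          smul_dotProduct, dotProduct_smul, smul_eq_mul, hcx x, ← hs]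
        rw [dotProduct_comm x (B *ᵥ c), ← hs]
        change _ - _ - s / q * (s - s / q * q) = _
        field_simp
        ring
      rwa [e] at h
    have h2 : star x ⬝ᵥ (B - ε • vecMulVec (B *ᵥ c) (B *ᵥ c)) *ᵥ x
        = x ⬝ᵥ B *ᵥ x - ε * s ^ 2 := by
      simp only [star_trivial, sub_mulVec, smul_mulVec, vecMulVec_mulVec, dotProduct_sub,
        dotProduct_smul, ← hs]
      rw [dotProduct_comm x (B *ᵥ c), ← hs]
      simp [sq]
    rw [h2]
    have h3 : ε * s ^ 2 ≤ 1 / q * s ^ 2 := by gcongr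
    have h4 : 1 / q * s ^ 2 = s ^ 2 / q := by ring
    linarith

/-- The quantity that decreases when a rank-one piece is peeled off: the rank plus the number of
nonzero entries. -/
noncomputable def peelMeasure {n : ℕ} (B : Matrix (Fin n) (Fin n) ℝ) : ℕ :=
  B.rank + (Finset.univ.filter fun p : Fin n × Fin n => B p.1 p.2 ≠ 0).card

/-- A nonzero vector `z = B c ≥ 0` with clique support can be peeled off with a coefficient so large
that the rank or the support of `B` shrinks. -/
lemma exists_peel {n : ℕ} {B : Matrix (Fin n) (Fin n) ℝ} (hB : B.PosSemidef)
    (hB0 : ∀ i j, 0 ≤ B i j) (c : Fin n → ℝ) (hz0 : ∀ i, 0 ≤ (B *ᵥ c) i) (hz : B *ᵥ c ≠ 0)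
    (hcl : ∀ i j, (B *ᵥ c) i ≠ 0 → (B *ᵥ c) j ≠ 0 → B i j ≠ 0) :
    ∃ ε : ℝ, 0 ≤ ε ∧ (B - ε • vecMulVec (B *ᵥ c) (B *ᵥ c)).PosSemidef ∧
      (∀ i j, 0 ≤ (B - ε • vecMulVec (B *ᵥ c) (B *ᵥ c)) i j) ∧
      peelMeasure (B - ε • vecMulVec (B *ᵥ c) (B *ᵥ c)) < peelMeasure B := by
  have hq0 : c ⬝ᵥ B *ᵥ c ≠ 0 := fun h => hz ((hB.dotProduct_mulVec_zero_iff c).1 (by simpa using h))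
  have hq : 0 < c ⬝ᵥ B *ᵥ c :=
    lt_of_le_of_ne (by simpa using hB.dotProduct_mulVec_nonneg c) hq0.symm
  set z := B *ᵥ c with hzdef
  set q := c ⬝ᵥ z with hqdef
  -- `m`, attained at `p`, is the largest coefficient that keeps the entries nonnegative
  obtain ⟨p, hp, hmin⟩ := Finset.exists_min_image
    (Finset.univ.filter fun p : Fin n × Fin n => z p.1 * z p.2 ≠ 0)
    (fun p => B p.1 p.2 / (z p.1 * z p.2)) (by
      obtain ⟨i, hi⟩ := Function.ne_iff.1 hz
      exact ⟨(i, i), by simpa using hi⟩)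
  simp only [Finset.mem_filter, Finset.mem_univ, true_and] at hp hmin
  set m := B p.1 p.2 / (z p.1 * z p.2) with hm
  have hm0 : 0 ≤ m := div_nonneg (hB0 _ _) (mul_nonneg (hz0 _) (hz0 _))
  have hle : ∀ ε ≤ m, ∀ i j, 0 ≤ (B - ε • vecMulVec z z) i j := by
    intro ε hε i j
    simp only [Matrix.sub_apply, Matrix.smul_apply, vecMulVec_apply, smul_eq_mul]
    by_cases h : z i * z j = 0
    · simp [h, hB0]
    · have h1 := hε.trans (hmin (i, j) h)
      rw [le_div_iff₀ (lt_of_le_of_ne (mul_nonneg (hz0 _) (hz0 _)) (Ne.symm h))] at h1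
      linarith
  have hrng : ∀ ε : ℝ, LinearMap.range (B - ε • vecMulVec z z).mulVecLin
      ≤ LinearMap.range B.mulVecLin := by
    rintro ε _ ⟨x, rfl⟩
    refine ⟨x - (ε * (z ⬝ᵥ x)) • c, ?_⟩
    ext i
    simp [mulVec_sub, mulVec_smul, vecMulVec_mulVec, ← hzdef]
    ring
  have hsub : ∀ ε : ℝ, (Finset.univ.filter fun p : Fin n × Fin n =>
        (B - ε • vecMulVec z z) p.1 p.2 ≠ 0)
      ⊆ Finset.univ.filter fun p : Fin n × Fin n => B p.1 p.2 ≠ 0 := by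
    intro ε r hr
    rw [Finset.mem_filter] at hr ⊢
    refine ⟨Finset.mem_univ _, fun h0 => hr.2 ?_⟩
    have : z r.1 = 0 ∨ z r.2 = 0 := by
      by_contra! h
      exact hcl _ _ h.1 h.2 h0
    rcases this with h | h <;> simp [vecMulVec_apply, h, h0]
  rcases le_total (1 / q) m with h | h
  · -- `c` enters the kernel, so `z` leaves the range
    have hps := posSemidef_sub_smul_vecMulVec hB c hq (ε := 1 / q) le_rfl
    refine ⟨1 / q, by positivity, hps, hle _ h, ?_⟩
    refine add_lt_add_of_lt_of_le ?_ (Finset.card_le_card (hsub _))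
    refine Submodule.finrank_lt_finrank_of_lt (lt_of_le_of_ne (hrng _) fun heq => hq0 ?_)
    have hzr : z ∈ LinearMap.range B.mulVecLin := ⟨c, rfl⟩
    rw [← heq] at hzr
    obtain ⟨x, hx⟩ := hzr
    have hker : (B - (1 / q) • vecMulVec z z) *ᵥ c = 0 := by
      ext i
      simp only [sub_mulVec, smul_mulVec, vecMulVec_mulVec, ← hzdef, dotProduct_comm z c, ← hqdef]
      simp [hq0]
    have hsym : (B - (1 / q) • vecMulVec z z)ᵀ = B - (1 / q) • vecMulVec z z := by
      simpa only [conjTranspose_eq_transpose_of_trivial] using hps.isHermitian.eq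
    rw [mulVecLin_apply] at hx
    rw [hqdef, ← hx, dotProduct_mulVec, ← mulVec_transpose, hsym, hker, zero_dotProduct]
  · -- the entry at `p` becomes zero
    refine ⟨m, hm0, posSemidef_sub_smul_vecMulVec hB c hq h, hle _ le_rfl, ?_⟩
    refine add_lt_add_of_le_of_lt (Submodule.finrank_mono (hrng _)) (Finset.card_lt_card ?_)
    refine (Finset.ssubset_iff_of_subset (hsub m)).2 ⟨p, ?_, ?_⟩
    · simpa using hcl _ _ (left_ne_zero_of_mul hp) (right_ne_zero_of_mul hp)
    · simp [vecMulVec_apply, hm, hp]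

lemma no_five_distinct {n : ℕ} (hn : n ≤ 4) {a b c d e : Fin n} (hab : a ≠ b) (hac : a ≠ c)
    (had : a ≠ d) (hbc : b ≠ c) (hbd : b ≠ d) (hcd : c ≠ d) :
    e = a ∨ e = b ∨ e = c ∨ e = d := by
  by_contra! h
  have h5 : ({e, a, b, c, d} : Finset (Fin n)).card = 5 := by
    rw [Finset.card_insert_of_notMem (by simp [h]), Finset.card_insert_of_notMem (by simp [*]),
      Finset.card_insert_of_notMem (by simp [*]), Finset.card_insert_of_notMem (by simp [*]),
      Finset.card_singleton]
  have := Finset.card_le_univ ({e, a, b, c, d} : Finset (Fin n))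
  simp at this
  omega

/-- A graph on at most four vertices has a simplicial vertex or is a 4-cycle. Here `P` is adjacency
or equality on its vertices, which are the `i` with `P i i`. Take nonadjacent neighbours `b`, `d` of
`a`; since they are not simplicial either, each has a neighbour that is not adjacent to `a`, and for
lack of a fifth vertex it is the same one. -/
lemma simplicial_or_cycle {n : ℕ} (hn : n ≤ 4) (P : Fin n → Fin n → Prop)
    (hsymm : ∀ i j, P i j → P j i) (hrefl : ∀ i j, P i j → P i i) (hne : ∃ i, P i i) :
    (∃ i, P i i ∧ ∀ j k, P i j → P i k → P j k) ∨
    ∃ a b c d, a ≠ b ∧ a ≠ c ∧ a ≠ d ∧ b ≠ c ∧ b ≠ d ∧ c ≠ d ∧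
      P a b ∧ P b c ∧ P c d ∧ P d a ∧ ¬ P a c ∧ ¬ P b d := by
  by_contra! hcon
  obtain ⟨hns, hnc⟩ := hcon
  obtain ⟨a, ha⟩ := hne
  obtain ⟨b, d, hab, had, hbd⟩ := hns a ha
  have hbb := hrefl b a (hsymm _ _ hab)
  have hdd := hrefl d a (hsymm _ _ had)
  have nab : a ≠ b := by rintro rfl; exact hbd had
  have nad : a ≠ d := by rintro rfl; exact hbd (hsymm _ _ hab)
  have nbd : b ≠ d := by rintro rfl; exact hbd hbb
  -- otherwise two nonadjacent neighbours `x`, `y` of `u` are neighbours of `a` as well, and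
  -- `a`, `u`, `v`, `x`, `y` are five distinct vertices
  have key : ∀ u v, P a u → P a v → ¬ P u v → P u u → a ≠ u → a ≠ v → u ≠ v →
      ∃ c, P u c ∧ ¬ P a c := by
    intro u v hau hav huv huu nau nav nuv
    obtain ⟨x, y, hx, hy, hxy⟩ := hns u huu
    by_contra! hall
    have hax := hall x hx
    have hay := hall y hy
    have hxx := hrefl x a (hsymm _ _ hax)
    have nax : a ≠ x := by rintro rfl; exact hxy hay
    have nay : a ≠ y := by rintro rfl; exact hxy (hsymm _ _ hax)
    have nux : u ≠ x := by rintro rfl; exact hxy hy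
    have nuy : u ≠ y := by rintro rfl; exact hxy (hsymm _ _ hx)
    have nvx : v ≠ x := by rintro rfl; exact huv hx
    have nvy : v ≠ y := by rintro rfl; exact huv hy
    have nxy : x ≠ y := by rintro rfl; exact hxy hxx
    rcases no_five_distinct hn (e := y) nau nav nax nuv nux nvx with h | h | h | h
    · exact nay h.symm
    · exact nuy h.symm
    · exact nvy h.symm
    · exact nxy h.symm
  obtain ⟨c, hbc, hac⟩ := key b d hab had hbd hbb nab nad nbd
  obtain ⟨c', hdc, hac'⟩ := key d b had hab (fun h => hbd (hsymm _ _ h)) hdd nad nab nbd.symm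
  have nac : a ≠ c := by rintro rfl; exact hac ha
  have nbc : b ≠ c := by rintro rfl; exact hac hab
  have ndc : c ≠ d := by rintro rfl; exact hac had
  obtain rfl : c' = c := by
    rcases no_five_distinct hn (e := c') nab nac nad nbc nbd ndc with h | h | h | h
    · exact absurd (h ▸ ha) hac'
    · exact absurd (h ▸ hab) hac'
    · exact h
    · exact absurd (h ▸ had) hac'
  exact hbd (hnc a b c' d nab nac nad nbc nbd ndc hab hbc (hsymm _ _ hdc) (hsymm _ _ had) hac)

lemma sq_le_diag {n : ℕ} {B : Matrix (Fin n) (Fin n) ℝ} (hB : B.PosSemidef) (i j : Fin n) :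
    B i j ^ 2 ≤ B i i * B j j := by
  have hs : B j i = B i j := by simpa using hB.isHermitian.apply i j
  have h := (hB.submatrix ![i, j]).det_nonneg
  rw [det_fin_two] at h
  simp [hs] at h
  nlinarith

/-- A nonzero doubly nonnegative matrix of size at most `4` has a nonzero, nonnegative vector in its
range whose support is a clique of the graph of nonzero entries. -/
lemma exists_clique_vector {n : ℕ} (hn : n ≤ 4) {B : Matrix (Fin n) (Fin n) ℝ}
    (hB : B.PosSemidef) (hB0 : ∀ i j, 0 ≤ B i j) (hne : B ≠ 0) :
    ∃ c : Fin n → ℝ, (∀ i, 0 ≤ (B *ᵥ c) i) ∧ B *ᵥ c ≠ 0 ∧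
      ∀ i j, (B *ᵥ c) i ≠ 0 → (B *ᵥ c) j ≠ 0 → B i j ≠ 0 := by
  have hs : ∀ i j, B j i = B i j := fun i j => by simpa using hB.isHermitian.apply i j
  have hdiag : ∀ i j, B i j ≠ 0 → B i i ≠ 0 := by
    intro i j h h0
    have h1 := sq_le_diag hB i j
    rw [h0, zero_mul] at h1
    exact h (pow_eq_zero_iff two_ne_zero |>.1 (le_antisymm h1 (sq_nonneg _)))
  have hex : ∃ i, B i i ≠ 0 := by
    by_contra! h
    exact hne (by ext i j; by_contra h1; exact hdiag i j h1 (h i))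
  rcases simplicial_or_cycle hn (fun i j => B i j ≠ 0) (fun i j h => by rwa [hs]) hdiag hex with
    ⟨i, hi, hcl⟩ | ⟨a, b, c, d, nab, nac, nad, nbc, nbd, ncd, hab, hbc, hcd, hda, hac, hbd⟩
  · have e : ∀ j, (B *ᵥ Pi.single i 1) j = B i j := fun j => by simp [hs i j]
    refine ⟨Pi.single i 1, fun j => by rw [e]; exact hB0 _ _, fun h => hi ?_, fun j k hj hk => ?_⟩
    · rw [← e, h]; rfl
    · rw [e] at hj hk
      exact hcl j k hj hk
  · push Not at hac hbd
    have hmin := (hB.submatrix ![a, c, d]).det_nonneg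
    rw [det_fin_three] at hmin
    simp [hs a c, hs a d, hs c d, hac] at hmin
    have hcd2 := sq_le_diag hB c d
    have e : ∀ j, (B *ᵥ ((B c c * B d d - B c d ^ 2) • Pi.single a 1 +
        (B c d * B a d) • Pi.single c 1 - (B c c * B a d) • Pi.single d 1)) j =
        (B c c * B d d - B c d ^ 2) * B j a + B c d * B a d * B j c - B c c * B a d * B j d :=
      fun j => by simp [mulVec_add, mulVec_sub, mulVec_smul]
    generalize ((B c c * B d d - B c d ^ 2) • Pi.single a 1 +
        (B c d * B a d) • Pi.single c 1 - (B c c * B a d) • Pi.single d 1 : Fin n → ℝ) = w at e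
    have ea : 0 ≤ (B *ᵥ w) a := by
      rw [e, hac]
      linarith
    have eb : 0 < (B *ᵥ w) b := by
      have pos : ∀ i j, B i j ≠ 0 → 0 < B i j := fun i j h => lt_of_le_of_ne (hB0 i j) h.symm
      have had : 0 < B a d := pos _ _ (by rwa [hs d a])
      have h1 := mul_pos (mul_pos (pos _ _ hcd) had) (pos _ _ hbc)
      have h2 := mul_nonneg (sub_nonneg.2 hcd2) (hB0 b a)
      rw [e, hbd]
      linarith
    have ec : (B *ᵥ w) c = 0 := by
      rw [e, hs a c, hac]
      ring
    have ed : (B *ᵥ w) d = 0 := by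
      rw [e, hs a d, hs c d]
      ring
    have hcases := fun j => no_five_distinct hn (e := j) nab nac nad nbc nbd ncd
    have haa := hdiag a b hab
    have hbb := hdiag b c hbc
    have hba : B b a ≠ 0 := by rwa [hs]
    refine ⟨w, fun j => ?_, fun h => eb.ne' (by rw [h]; rfl), fun j k hj hk => ?_⟩
    · rcases hcases j with rfl | rfl | rfl | rfl
      exacts [ea, eb.le, ec.ge, ed.ge]
    · rcases hcases j with rfl | rfl | rfl | rfl <;>
        rcases hcases k with rfl | rfl | rfl | rfl <;>
        first | assumption | exact absurd ec ‹_› | exact absurd ed ‹_›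

lemma IsCompletelyPositive.add_vecMulVec {n : ℕ} {B : Matrix (Fin n) (Fin n) ℝ}
    (hB : IsCompletelyPositive B) {z : Fin n → ℝ} (hz : ∀ i, 0 ≤ z i) {ε : ℝ} (hε : 0 ≤ ε) :
    IsCompletelyPositive (B + ε • vecMulVec z z) := by
  obtain ⟨k, v, hv, rfl⟩ := hB
  refine ⟨k + 1, Fin.cons (√ε • z) v, fun j i => ?_, ?_⟩
  · refine Fin.cases ?_ (fun j => ?_) j
    · simpa using mul_nonneg (Real.sqrt_nonneg ε) (hz i)
    · simpa using hv j i
  · rw [Fin.sum_univ_succ, add_comm]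
    simp only [Fin.cons_zero, Fin.cons_succ, smul_vecMulVec, vecMulVec_smul, smul_smul,
      Real.mul_self_sqrt hε]

lemma dnn_isCompletelyPositive {n : ℕ} (hn : n ≤ 4) (B : Matrix (Fin n) (Fin n) ℝ)
    (hB : B.PosSemidef) (hB0 : ∀ i j, 0 ≤ B i j) : IsCompletelyPositive B := by
  induction hm : peelMeasure B using Nat.strong_induction_on generalizing B with
  | _ m ih =>
    by_cases hne : B = 0
    · exact ⟨0, Fin.elim0, fun j => j.elim0, by simp [hne]⟩
    · obtain ⟨c, hz0, hz, hcl⟩ := exists_clique_vector hn hB hB0 hne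
      obtain ⟨ε, hε, h1, h2, h3⟩ := exists_peel hB hB0 c hz0 hz hcl
      simpa using (ih _ (hm ▸ h3) _ h1 h2 rfl).add_vecMulVec hz0 hε

/-- Diananda's theorem: for `n ≤ 4`, every doubly nonnegative `n × n` matrix is
completely positive; in particular this holds for `n = 2`. -/
theorem diananda_dnn_imp_cp :
    (∀ n : ℕ, n ≤ 4 → ∀ B : Matrix (Fin n) (Fin n) ℝ,
      B.PosSemidef → (∀ i j, 0 ≤ B i j) → IsCompletelyPositive B) ∧
    (∀ B : Matrix (Fin 2) (Fin 2) ℝ,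
      B.PosSemidef → (∀ i j, 0 ≤ B i j) → IsCompletelyPositive B) :=
  ⟨fun _ hn B => dnn_isCompletelyPositive hn B,
    fun B => dnn_isCompletelyPositive (by norm_num) B⟩
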